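/- arXiv:2410.03467 — 2 statements merged into one kernel-verified Lean document; each statement's English description precedes it below -/
import Mathlib

section
/- Let n be a positive integer and let F be a field whose characteristic is 0 or an odd rational prime p. Then the anti-centralizer C̄(b) of the generator b in the group algebra F V_{8n} is an F-subspace of dimension 4n−2 if n is odd, and 4n−4 if n is even; moreover the set {(a^{2k} − a^{−2k})b^j : 1 ≤ k ≤ ⌊(n−1)/2⌋, 0 ≤ j ≤ 3} ∪ {(a^{2k−1} − a^{−(2k−1)}b^2), (a^{2k−1} − a^{−(2k−1)}b^2)b : 1 ≤ k ≤ ⌊(n+1)/2⌋} ∪ {(a^{−(2k−1)} − a^{2k−1}b^2), (a^{−(2k−1)} − a^{2k−1}b^2)b : 1 ≤ k ≤ ⌈(n−1)/2⌉} is a basis of C̄(b) over F. -/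
/-- The relators of the presentation
`V_{8n} = ⟨a, b ∣ a^{2n} = b⁴ = 1, (ba)² = 1, (b⁻¹a)² = 1⟩`,
where `a` is the generator indexed by `0` and `b` the one indexed by `1`.
(The relations `ba = a⁻¹b⁻¹` and `b⁻¹a = a⁻¹b` are equivalent to
`(ba)² = 1` and `(b⁻¹a)² = 1` respectively.) -/
def V8nRels (n : ℕ) : Set (FreeGroup (Fin 2)) :=
  {(FreeGroup.of 0) ^ (2 * n), (FreeGroup.of 1) ^ 4,
   (FreeGroup.of 1 * FreeGroup.of 0) ^ 2,
   ((FreeGroup.of 1)⁻¹ * FreeGroup.of 0) ^ 2}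

/-- The group `V_{8n}` of order `8n`. -/
abbrev V8n (n : ℕ) : Type := PresentedGroup (V8nRels n)

/-- The generator `a` of `V_{8n}`. -/
def aV (n : ℕ) : V8n n := PresentedGroup.of 0

/-- The generator `b` of `V_{8n}`. -/
def bV (n : ℕ) : V8n n := PresentedGroup.of 1
/-- The anti-centralizer `C̄(β) = {α ∣ α * β = -(β * α)}` of an element `β` of an
`F`-algebra `A`, as an `F`-subspace of `A`. -/
def antiCentralizer (F : Type*) [CommSemiring F] {A : Type*} [Ring A] [Algebra F A]
    (β : A) : Submodule F A where
  carrier := {α | α * β = -(β * α)}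
  zero_mem' := by simp
  add_mem' := by
    intro x y hx hy
    simp only [Set.mem_setOf_eq] at *
    rw [add_mul, mul_add, hx, hy, neg_add]
  smul_mem' := by
    intro c x hx
    simp only [Set.mem_setOf_eq] at *
    rw [smul_mul_assoc, hx, mul_smul_comm, smul_neg]

/-- The claimed basis of the anti-centralizer `C̄(b)` in `F V_{8n}`:
`{(a^{2k} − a^{−2k})b^j : 1 ≤ k ≤ ⌊(n−1)/2⌋, 0 ≤ j ≤ 3}
  ∪ {(a^{2k−1} − a^{−(2k−1)}b²), (a^{2k−1} − a^{−(2k−1)}b²)b : 1 ≤ k ≤ ⌊(n+1)/2⌋}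
  ∪ {(a^{−(2k−1)} − a^{2k−1}b²), (a^{−(2k−1)} − a^{2k−1}b²)b : 1 ≤ k ≤ ⌈(n−1)/2⌉}`
(note `⌈(n-1)/2⌉ = (n - 1 + 1) / 2` in natural division). -/
def antiCentralizerBasisB (n : ℕ) (F : Type*) [Field F] : Set (MonoidAlgebra F (V8n n)) :=
  let a := aV n
  let b := bV n
  let σ := MonoidAlgebra.of F (V8n n)
  {x | ∃ k j : ℕ, 1 ≤ k ∧ k ≤ (n - 1) / 2 ∧ j ≤ 3 ∧
      x = (σ (a ^ (2 * k)) - σ (a⁻¹ ^ (2 * k))) * σ b ^ j} ∪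
  {x | ∃ k : ℕ, 1 ≤ k ∧ k ≤ (n + 1) / 2 ∧
      (x = σ (a ^ (2 * k - 1)) - σ (a⁻¹ ^ (2 * k - 1) * b ^ 2) ∨
       x = (σ (a ^ (2 * k - 1)) - σ (a⁻¹ ^ (2 * k - 1) * b ^ 2)) * σ b)} ∪
  {x | ∃ k : ℕ, 1 ≤ k ∧ k ≤ (n - 1 + 1) / 2 ∧
      (x = σ (a⁻¹ ^ (2 * k - 1)) - σ (a ^ (2 * k - 1) * b ^ 2) ∨
       x = (σ (a⁻¹ ^ (2 * k - 1)) - σ (a ^ (2 * k - 1) * b ^ 2)) * σ b)}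

/-!
Since `b²` is central, conjugation by `b` permutes the group in orbits of size one or two, and it
extends to an involution `κ` of the group algebra whose `-1`-eigenspace is `C̄(b)`. As `2` is
invertible, this eigenspace is the image of `1 - κ`, so it is spanned by the differences
`g - bgb⁻¹`, and one nonfixed `g` from each orbit gives a basis. Now every element of the group is
`aⁱbʲ` for a unique `(i, j)` modulo `(2n, 4)`, and `b(aⁱbʲ)b⁻¹ = a⁻ⁱb²ⁱ⁺ʲ`, so such representatives
can be listed explicitly. Uniqueness of the normal form is seen in the product of the dihedral
groups of orders `4n` and `8`, where `a ↦ (r, s)` and `b ↦ (s, r)`.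
-/

section OrbitDifferences

variable {R M X ι : Type*} [Ring R] [AddCommGroup M] [Module R M]

theorem linearIndependent_sub_of_injective_of_ne {f : X → M} (hf : LinearIndependent R f)
    {v w : ι → X} (hv : Function.Injective v) (hwv : ∀ i j, w i ≠ v j) :
    LinearIndependent R fun i ↦ f (v i) - f (w i) := by
  have hsingle : LinearIndependent R
      fun i ↦ (Finsupp.single (v i) 1 - Finsupp.single (w i) 1 : X →₀ R) := by
    refine .of_comp (Finsupp.lcomapDomain v hv) ?_
    convert Finsupp.linearIndependent_single_one R ι using 1
    ext i j
    classical simp [Finsupp.single_apply, hv.eq_iff, hwv]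
  simpa [Function.comp_def] using
    hsingle.map' (Finsupp.linearCombination R f) (LinearMap.ker_eq_bot.mpr hf)

theorem span_range_sub_comp_involutive {φ : X → X} (hφ : Function.Involutive φ) {τ : ι → X}
    (hτ : ∀ x, φ x ≠ x → x ∈ Set.range τ ∨ φ x ∈ Set.range τ) (f : X → M) :
    Submodule.span R (Set.range fun i ↦ f (τ i) - f (φ (τ i))) =
      Submodule.span R (Set.range fun x ↦ f x - f (φ x)) := by
  refine le_antisymm (Submodule.span_mono ?_) (Submodule.span_le.mpr ?_)
  · rintro _ ⟨i, rfl⟩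
    exact ⟨τ i, rfl⟩
  · rintro _ ⟨x, rfl⟩
    by_cases hx : φ x = x
    · simp [hx]
    · rcases hτ x hx with ⟨i, rfl⟩ | ⟨i, hi⟩
      · exact Submodule.subset_span ⟨i, rfl⟩
      · rw [SetLike.mem_coe, ← neg_mem_iff]
        exact Submodule.subset_span ⟨i, by simp [hi, hφ x]⟩

end OrbitDifferences

section GroupAlgebra

open MonoidAlgebra

variable {R G : Type*} [CommRing R] [Group G] {b : G}

theorem involutive_conj_of_sq_mem_center (hb : b ^ 2 ∈ Subgroup.center G) :
    Function.Involutive (MulAut.conj b) := fun g ↦ by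
  rw [← MulAut.mul_apply, ← map_mul, ← sq, MulAut.conj_apply, ← Subgroup.mem_center_iff.mp hb g,
    mul_inv_cancel_right]

theorem of_sub_of_conj_mem_antiCentralizer (hb : b ^ 2 ∈ Subgroup.center G) (g : G) :
    of R G g - of R G (MulAut.conj b g) ∈ antiCentralizer R (of R G b) := by
  have hconj : b * MulAut.conj b g = g * b := by
    rw [MulAut.conj_apply, ← mul_assoc, ← mul_assoc, ← sq, ← Subgroup.mem_center_iff.mp hb g]
    group
  change (_ - _) * _ = -(_ * (_ - _))
  rw [sub_mul, mul_sub, ← map_mul, ← map_mul, ← map_mul, ← map_mul, hconj, MulAut.conj_apply,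
    inv_mul_cancel_right, neg_sub]

theorem sub_conj_mem_span_range_of_sub_of_conj (b : G) (α : MonoidAlgebra R G) :
    α - of R G b * α * of R G b⁻¹ ∈
      Submodule.span R (Set.range fun g ↦ of R G g - of R G (MulAut.conj b g)) := by
  induction α using MonoidAlgebra.induction_on with
  | of g =>
    rw [← map_mul, ← map_mul]
    exact Submodule.subset_span ⟨g, rfl⟩
  | add x y hx hy =>
    rw [mul_add, add_mul, add_sub_add_comm]
    exact add_mem hx hy
  | smul r x hx =>
    rw [mul_smul_comm, smul_mul_assoc, ← smul_sub]
    exact Submodule.smul_mem _ r hx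

theorem span_range_of_sub_of_conj [Invertible (2 : R)] (hb : b ^ 2 ∈ Subgroup.center G) :
    Submodule.span R (Set.range fun g ↦ of R G g - of R G (MulAut.conj b g)) =
      antiCentralizer R (of R G b) := by
  refine le_antisymm (Submodule.span_le.mpr ?_) fun α hα ↦ ?_
  · rintro _ ⟨g, rfl⟩
    exact of_sub_of_conj_mem_antiCentralizer hb g
  · have hconj : of R G b * α * of R G b⁻¹ = -α := by
      rw [← neg_eq_iff_eq_neg.mpr hα, neg_mul, mul_assoc, ← map_mul, mul_inv_cancel, map_one,
        mul_one]
    have hα_eq : α = (⅟2 : R) • (α - of R G b * α * of R G b⁻¹) := by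
      rw [hconj, sub_neg_eq_add, smul_add, invOf_two_smul_add_invOf_two_smul]
    rw [hα_eq]
    exact Submodule.smul_mem _ _ (sub_conj_mem_span_range_of_sub_of_conj b α)

end GroupAlgebra

theorem two_ne_zero_of_odd_charP (R : Type*) [NonAssocSemiring R] [Nontrivial R] {p : ℕ}
    [CharP R p] (hp : Odd p) : (2 : R) ≠ 0 := fun h ↦ by
  have hdvd : p ∣ 2 := (CharP.cast_eq_zero_iff R p 2).mp (by exact_mod_cast h)
  exact CharP.char_ne_one R p (Nat.Coprime.eq_one_of_dvd hp.coprime_two_right hdvd)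

namespace V8n

variable (n : ℕ)

theorem aV_pow_two_mul : aV n ^ (2 * n) = 1 :=
  PresentedGroup.one_of_mem (rels := V8nRels n) (x := FreeGroup.of 0 ^ (2 * n)) (by simp [V8nRels])

theorem bV_pow_four : bV n ^ 4 = 1 :=
  PresentedGroup.one_of_mem (rels := V8nRels n) (x := FreeGroup.of 1 ^ 4) (by simp [V8nRels])

theorem bV_mul_aV_sq : (bV n * aV n) ^ 2 = 1 :=
  PresentedGroup.one_of_mem (rels := V8nRels n) (x := (FreeGroup.of 1 * FreeGroup.of 0) ^ 2)
    (by simp [V8nRels])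

theorem bV_inv_mul_aV_sq : ((bV n)⁻¹ * aV n) ^ 2 = 1 :=
  PresentedGroup.one_of_mem (rels := V8nRels n) (x := ((FreeGroup.of 1)⁻¹ * FreeGroup.of 0) ^ 2)
    (by simp [V8nRels])

theorem inv_bV_sq : (bV n ^ 2)⁻¹ = bV n ^ 2 :=
  inv_eq_of_mul_eq_one_left (by rw [← pow_add, bV_pow_four])

theorem bV_mul_aV_mul_bV : bV n * aV n * bV n = (aV n)⁻¹ :=
  eq_inv_of_mul_eq_one_left (by rw [← bV_mul_aV_sq n, sq, mul_assoc])

theorem commute_bV_sq_aV : Commute (bV n ^ 2) (aV n) := by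
  have hinv : (bV n)⁻¹ * aV n * (bV n)⁻¹ = (aV n)⁻¹ :=
    eq_inv_of_mul_eq_one_left (by rw [← bV_inv_mul_aV_sq n, sq, mul_assoc])
  calc bV n ^ 2 * aV n
      = bV n * (bV n * aV n * bV n) * (bV n)⁻¹ := by simp [sq, mul_assoc]
    _ = bV n * ((bV n)⁻¹ * aV n * (bV n)⁻¹) * (bV n)⁻¹ := by rw [bV_mul_aV_mul_bV, hinv]
    _ = aV n * (bV n ^ 2)⁻¹ := by group
    _ = aV n * bV n ^ 2 := by rw [inv_bV_sq]

theorem bV_sq_mem_center : bV n ^ 2 ∈ Subgroup.center (V8n n) := by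
  have hcentralizer (g : V8n n) : g ∈ Subgroup.centralizer {bV n ^ 2} := by
    refine PresentedGroup.generated_by (V8nRels n) _ (fun i ↦ ?_) g
    rw [Subgroup.mem_centralizer_singleton_iff]
    fin_cases i
    · exact (commute_bV_sq_aV n).eq.symm
    · exact ((Commute.refl (bV n)).pow_right 2).eq
  exact Subgroup.mem_center_iff.mpr fun g ↦
    Subgroup.mem_centralizer_singleton_iff.mp (hcentralizer g)

theorem conj_bV_aV : MulAut.conj (bV n) (aV n) = (aV n)⁻¹ * bV n ^ 2 := by
  rw [MulAut.conj_apply, ← bV_mul_aV_mul_bV, ← inv_bV_sq]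
  group

theorem conj_bV_zpow_mul_zpow (i j : ℤ) :
    MulAut.conj (bV n) (aV n ^ i * bV n ^ j) = aV n ^ (-i) * bV n ^ (2 * i + j) := by
  have hcomm : Commute (aV n)⁻¹ (bV n ^ 2) := (commute_bV_sq_aV n).symm.inv_left
  have hb : MulAut.conj (bV n) (bV n) = bV n := by simp
  rw [map_mul, map_zpow, map_zpow, conj_bV_aV, hb, hcomm.mul_zpow, inv_zpow', zpow_add, zpow_mul,
    mul_assoc]
  norm_cast

theorem bV_mul_zpow_mul_zpow (i j : ℤ) :
    bV n * (aV n ^ i * bV n ^ j) = aV n ^ (-i) * bV n ^ (2 * i + j + 1) := by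
  rw [zpow_add_one, ← mul_assoc (_ ^ _), ← conj_bV_zpow_mul_zpow, MulAut.conj_apply,
    inv_mul_cancel_right]

theorem exists_zpow_mul_zpow_eq (g : V8n n) : ∃ i j : ℤ, aV n ^ i * bV n ^ j = g := by
  have hg : g ∈ Subgroup.closure (Set.range (PresentedGroup.of (rels := V8nRels n))) :=
    PresentedGroup.closure_range_of (V8nRels n) ▸ Subgroup.mem_top g
  induction hg using Subgroup.closure_induction_left with
  | one => exact ⟨0, 0, by simp⟩
  | mul_left _ hx _ _ ih =>
    obtain ⟨⟨i, j, rfl⟩, x, rfl⟩ := ih, hx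
    fin_cases x
    · exact ⟨i + 1, j, by rw [add_comm, zpow_one_add, mul_assoc]; rfl⟩
    · exact ⟨-i, 2 * i + j + 1, (bV_mul_zpow_mul_zpow n i j).symm⟩
  | inv_mul_cancel _ hx _ _ ih =>
    obtain ⟨⟨i, j, rfl⟩, x, rfl⟩ := ih, hx
    fin_cases x
    · exact ⟨i - 1, j, by rw [sub_eq_neg_add, zpow_add, zpow_neg_one, mul_assoc]; rfl⟩
    · refine ⟨-i, 2 * i + j - 1, eq_inv_mul_of_mul_eq ?_⟩
      refine (bV_mul_zpow_mul_zpow n _ _).trans ?_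
      congr 2 <;> ring

theorem lift_eq_one_of_mem_V8nRels {G : Type*} [Group G] {x y : G} (hx : x ^ (2 * n) = 1)
    (hy : y ^ 4 = 1) (hyx : (y * x) ^ 2 = 1) (hyx' : (y⁻¹ * x) ^ 2 = 1) :
    ∀ r ∈ V8nRels n, FreeGroup.lift ![x, y] r = 1 := by
  rintro r (rfl | rfl | rfl | rfl) <;> simpa

/-- The quotient map of `V_{8n}` onto the dihedral group of order `4n`, with kernel `⟨b²⟩`. -/
def toDihedralTwoMul : V8n n →* DihedralGroup (2 * n) :=
  PresentedGroup.toGroup (lift_eq_one_of_mem_V8nRels n (x := .r 1) (y := .sr 0)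
    DihedralGroup.r_one_pow_n (by simp [pow_succ]) (by simp [sq]) (by simp [sq]))

/-- The quotient map of `V_{8n}` onto the dihedral group of order `8`, with kernel `⟨a²⟩`. -/
def toDihedralFour : V8n n →* DihedralGroup 4 :=
  PresentedGroup.toGroup (lift_eq_one_of_mem_V8nRels n (x := .sr 0) (y := .r 1)
    (by simp [pow_mul, sq]) DihedralGroup.r_one_pow_n (by simp [sq]) (by simp [sq]))

@[simp]
theorem toDihedralTwoMul_aV : toDihedralTwoMul n (aV n) = .r 1 := PresentedGroup.toGroup.of _

@[simp]
theorem toDihedralTwoMul_bV : toDihedralTwoMul n (bV n) = .sr 0 := PresentedGroup.toGroup.of _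

@[simp]
theorem toDihedralFour_aV : toDihedralFour n (aV n) = .sr 0 := PresentedGroup.toGroup.of _

@[simp]
theorem toDihedralFour_bV : toDihedralFour n (bV n) = .r 1 := PresentedGroup.toGroup.of _

variable {n}

theorem four_dvd_of_aV_zpow_eq_bV_zpow {i j : ℤ} (h : aV n ^ i = bV n ^ j) : 4 ∣ j := by
  have hD : (.sr 0 : DihedralGroup 4) ^ i = .r j := by
    simpa using congrArg (toDihedralFour n) h
  rcases Int.even_or_odd' i with ⟨k, rfl | rfl⟩
  · rw [zpow_mul, zpow_two, DihedralGroup.sr_mul_self, one_zpow, DihedralGroup.one_def,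
      DihedralGroup.r.injEq] at hD
    exact_mod_cast (ZMod.intCast_zmod_eq_zero_iff_dvd j 4).mp hD.symm
  · rw [zpow_add_one, zpow_mul, zpow_two, DihedralGroup.sr_mul_self, one_zpow, one_mul] at hD
    cases hD

theorem two_mul_dvd_of_aV_zpow_eq_bV_zpow {i j : ℤ} (h : aV n ^ i = bV n ^ j) :
    2 * (n : ℤ) ∣ i := by
  have hD : (.r i : DihedralGroup (2 * n)) = .sr 0 ^ j := by
    simpa using congrArg (toDihedralTwoMul n) h
  obtain ⟨k, rfl⟩ := (show (2 : ℤ) ∣ 4 by norm_num).trans (four_dvd_of_aV_zpow_eq_bV_zpow h)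
  rw [zpow_mul, zpow_two, DihedralGroup.sr_mul_self, one_zpow, DihedralGroup.one_def,
    DihedralGroup.r.injEq] at hD
  exact_mod_cast (ZMod.intCast_zmod_eq_zero_iff_dvd i (2 * n)).mp hD

theorem zpow_mul_zpow_eq_iff {i j k l : ℤ} :
    aV n ^ i * bV n ^ j = aV n ^ k * bV n ^ l ↔ i ≡ k [ZMOD 2 * n] ∧ j ≡ l [ZMOD 4] := by
  constructor
  · intro h
    have h' : aV n ^ (k - i) = bV n ^ (j - l) := by
      rw [sub_eq_neg_add, zpow_add, zpow_neg, zpow_sub, inv_mul_eq_iff_eq_mul, ← mul_assoc, h,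
        mul_inv_cancel_right]
    exact ⟨Int.modEq_iff_dvd.mpr (two_mul_dvd_of_aV_zpow_eq_bV_zpow h'),
      (Int.modEq_iff_dvd.mpr (four_dvd_of_aV_zpow_eq_bV_zpow h')).symm⟩
  · rintro ⟨hik, hjl⟩
    rw [zpow_eq_zpow_emod i (n := 2 * n) (by exact_mod_cast aV_pow_two_mul n), hik,
      ← zpow_eq_zpow_emod k (by exact_mod_cast aV_pow_two_mul n),
      zpow_eq_zpow_emod j (n := 4) (by exact_mod_cast bV_pow_four n), hjl,
      ← zpow_eq_zpow_emod l (by exact_mod_cast bV_pow_four n)]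

theorem injOn_zpow_mul_zpow :
    Set.InjOn (fun p : ℤ × ℤ ↦ aV n ^ p.1 * bV n ^ p.2) (Set.Ioc (-n : ℤ) n ×ˢ Set.Ico 0 4) := by
  rintro ⟨i, j⟩ ⟨⟨hi, hi'⟩, hj, hj'⟩ ⟨k, l⟩ ⟨⟨hk, hk'⟩, hl, hl'⟩ h
  obtain ⟨hik, hjl⟩ := zpow_mul_zpow_eq_iff.mp h
  have hki : k - i = 0 := Int.eq_zero_of_abs_lt_dvd hik.dvd (abs_lt.mpr (by dsimp at *; omega))
  ext
  · exact (sub_eq_zero.mp hki).symm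
  · rwa [Int.ModEq, Int.emod_eq_of_lt hj hj', Int.emod_eq_of_lt hl hl'] at hjl

theorem surjOn_zpow_mul_zpow (hn : 0 < n) :
    Set.SurjOn (fun p : ℤ × ℤ ↦ aV n ^ p.1 * bV n ^ p.2) (Set.Ioc (-n : ℤ) n ×ˢ Set.Ico 0 4)
      Set.univ := by
  intro g _
  obtain ⟨i, j, rfl⟩ := exists_zpow_mul_zpow_eq n g
  have hn' : (0 : ℤ) < 2 * n := by omega
  refine ⟨(toIocMod hn' (-n) i, j % 4), ⟨?_, ?_⟩, zpow_mul_zpow_eq_iff.mpr ⟨?_, ?_⟩⟩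
  · simpa [two_mul] using toIocMod_mem_Ioc hn' (-n : ℤ) i
  · exact ⟨Int.emod_nonneg j (by norm_num), Int.emod_lt_of_pos j (by norm_num)⟩
  · exact Int.modEq_iff_dvd.mpr ⟨toIocDiv hn' (-n) i, by
      rw [← self_sub_toIocDiv_zsmul]; simp [mul_comm]⟩
  · exact Int.mod_modEq j 4

/-- The index type of the basis of `C̄(b)`: one summand for each of the three sets whose union is
`antiCentralizerBasisB`, with the index `k` of the paper shifted to start from `0`. -/
abbrev BasisIndex (n : ℕ) : Type :=
  (Fin ((n - 1) / 2) × Fin 4) ⊕ (Fin ((n + 1) / 2) × Fin 2) ⊕ (Fin (n / 2) × Fin 2)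

/-- The exponents `(i, j)` for which `aⁱbʲ` has coefficient `1` in the basis element indexed by the
argument (its other term has coefficient `-1`). -/
def basisExponents (n : ℕ) : BasisIndex n → ℤ × ℤ
  | .inl (k, j) => (2 * (k + 1), j)
  | .inr (.inl (k, j)) => (2 * k + 1, j)
  | .inr (.inr (k, j)) => (-(2 * k + 1), j)

/-- Representatives of the two-element orbits of conjugation by `b`, one for each orbit. -/
def orbitRep (n : ℕ) (x : BasisIndex n) : V8n n :=
  aV n ^ (basisExponents n x).1 * bV n ^ (basisExponents n x).2

theorem card_basisIndex (n : ℕ) :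
    Fintype.card (BasisIndex n) = 4 * ((n - 1) / 2) + 2 * n := by
  simp only [Fintype.card_sum, Fintype.card_prod, Fintype.card_fin]
  omega

theorem basisExponents_injective : Function.Injective (basisExponents n) := by
  rintro (⟨k, j⟩ | ⟨k, j⟩ | ⟨k, j⟩) (⟨k', j'⟩ | ⟨k', j'⟩ | ⟨k', j'⟩) h <;>
    simp only [basisExponents, Prod.mk.injEq] at h <;>
    first
    | omega
    | congr <;> omega

theorem mem_range_basisExponents {p : ℤ × ℤ} :
    p ∈ Set.range (basisExponents n) ↔
      Even p.1 ∧ p.1 ∈ Set.Ioo 0 (n : ℤ) ∧ p.2 ∈ Set.Ico 0 4 ∨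
        Odd p.1 ∧ p.1 ∈ Set.Ioc (-n : ℤ) n ∧ p.2 ∈ Set.Ico 0 2 := by
  simp only [Set.mem_Ioo, Set.mem_Ioc, Set.mem_Ico, Int.even_iff, Int.odd_iff]
  constructor
  · rintro ⟨⟨k, j⟩ | ⟨k, j⟩ | ⟨k, j⟩, rfl⟩ <;> dsimp only [basisExponents] <;> omega
  · rintro (⟨hi, hin, hj⟩ | ⟨hi, hin, hj⟩)
    · refine ⟨.inl (⟨(p.1 / 2 - 1).toNat, by omega⟩, ⟨p.2.toNat, by omega⟩), ?_⟩
      ext <;> dsimp only [basisExponents] <;> omega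
    · rcases lt_or_ge 0 p.1 with hpos | hneg
      · refine ⟨.inr (.inl (⟨(p.1 / 2).toNat, by omega⟩, ⟨p.2.toNat, by omega⟩)), ?_⟩
        ext <;> dsimp only [basisExponents] <;> omega
      · refine ⟨.inr (.inr (⟨(-p.1 / 2).toNat, by omega⟩, ⟨p.2.toNat, by omega⟩)), ?_⟩
        ext <;> dsimp only [basisExponents] <;> omega

theorem orbitRep_injective : Function.Injective (orbitRep n) := by
  have hbox (x : BasisIndex n) : basisExponents n x ∈ Set.Ioc (-n : ℤ) n ×ˢ Set.Ico 0 4 := by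
    rcases mem_range_basisExponents.mp (Set.mem_range_self x) with h | h <;>
      simp only [Set.mem_Ioo, Set.mem_Ioc, Set.mem_Ico, Set.mem_prod] at h ⊢ <;> omega
  exact fun x y h ↦ basisExponents_injective (injOn_zpow_mul_zpow (hbox x) (hbox y) h)

theorem conj_orbitRep_ne (x y : BasisIndex n) :
    MulAut.conj (bV n) (orbitRep n x) ≠ orbitRep n y := by
  rw [orbitRep, orbitRep, conj_bV_zpow_mul_zpow, Ne, zpow_mul_zpow_eq_iff]
  have hx := mem_range_basisExponents.mp (Set.mem_range_self x)
  have hy := mem_range_basisExponents.mp (Set.mem_range_self y)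
  generalize basisExponents n x = p at *
  generalize basisExponents n y = q at *
  simp only [Set.mem_Ioo, Set.mem_Ioc, Set.mem_Ico, Int.even_iff, Int.odd_iff] at hx hy
  rintro ⟨hpq, hpq'⟩
  have hdvd : 2 * (n : ℤ) ∣ q.1 + p.1 := by simpa using hpq.dvd
  have hparity : (2 : ℤ) ∣ q.1 + p.1 := (dvd_mul_right _ _).trans hdvd
  rw [Int.modEq_iff_dvd] at hpq'
  rcases hx with hx | hx
  · have hle : 2 * (n : ℤ) ≤ q.1 + p.1 := Int.le_of_dvd (by omega) hdvd
    omega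
  · omega

theorem zpow_mul_zpow_mem_range_orbitRep {i j k l : ℤ}
    (h : (k, l) ∈ Set.range (basisExponents n)) (hki : k ≡ i [ZMOD 2 * n]) (hlj : l ≡ j [ZMOD 4]) :
    aV n ^ i * bV n ^ j ∈ Set.range (orbitRep n) := by
  obtain ⟨x, hx⟩ := h
  exact ⟨x, by rw [orbitRep, hx, zpow_mul_zpow_eq_iff]; exact ⟨hki, hlj⟩⟩

theorem zpow_mul_zpow_mem_range_orbitRep_of_even {i j k l : ℤ} (hk : Even k)
    (hkn : k ∈ Set.Ioo 0 (n : ℤ)) (hl : l ∈ Set.Ico 0 4) (hki : k ≡ i [ZMOD 2 * n])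
    (hlj : l ≡ j [ZMOD 4]) : aV n ^ i * bV n ^ j ∈ Set.range (orbitRep n) :=
  zpow_mul_zpow_mem_range_orbitRep (mem_range_basisExponents.mpr (.inl ⟨hk, hkn, hl⟩)) hki hlj

theorem zpow_mul_zpow_mem_range_orbitRep_of_odd {i j k l : ℤ} (hk : Odd k)
    (hkn : k ∈ Set.Ioc (-n : ℤ) n) (hl : l ∈ Set.Ico 0 2) (hki : k ≡ i [ZMOD 2 * n])
    (hlj : l ≡ j [ZMOD 4]) : aV n ^ i * bV n ^ j ∈ Set.range (orbitRep n) :=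
  zpow_mul_zpow_mem_range_orbitRep (mem_range_basisExponents.mpr (.inr ⟨hk, hkn, hl⟩)) hki hlj

theorem mem_range_orbitRep_or_conj_mem_range (hn : 0 < n) (g : V8n n)
    (hg : MulAut.conj (bV n) g ≠ g) :
    g ∈ Set.range (orbitRep n) ∨ MulAut.conj (bV n) g ∈ Set.range (orbitRep n) := by
  obtain ⟨⟨i, j⟩, ⟨hi, hj⟩, rfl⟩ := surjOn_zpow_mul_zpow hn (Set.mem_univ g)
  simp only [conj_bV_zpow_mul_zpow, Set.mem_Ioc, Set.mem_Ico] at hg hi hj ⊢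
  rcases Int.even_or_odd i with hi2 | hi2
  · have hconj : 2 * i + j ≡ j [ZMOD 4] := by
      rw [Int.even_iff] at hi2
      simp only [Int.ModEq]
      omega
    rcases lt_trichotomy i 0 with hneg | rfl | hpos
    · exact .inr (zpow_mul_zpow_mem_range_orbitRep_of_even hi2.neg ⟨by omega, by omega⟩ hj rfl
        hconj.symm)
    · exact absurd (by simp) hg
    · rcases hi.2.lt_or_eq with hin | rfl
      · exact .inl (zpow_mul_zpow_mem_range_orbitRep_of_even hi2 ⟨hpos, hin⟩ hj rfl rfl)
      · refine absurd (zpow_mul_zpow_eq_iff.mpr ⟨?_, hconj⟩) hg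
        exact Int.modEq_iff_dvd.mpr (by simp [two_mul])
  · rcases lt_or_ge j 2 with hj2 | hj2
    · exact .inl (zpow_mul_zpow_mem_range_orbitRep_of_odd hi2 hi ⟨hj.1, hj2⟩ rfl rfl)
    · have hconj : j - 2 ≡ 2 * i + j [ZMOD 4] := by
        rw [Int.odd_iff] at hi2
        simp only [Int.ModEq]
        omega
      have hj_sub : j - 2 ∈ Set.Ico 0 2 := ⟨by omega, by omega⟩
      rcases hi.2.lt_or_eq with hin | rfl
      · exact .inr (zpow_mul_zpow_mem_range_orbitRep_of_odd hi2.neg ⟨by omega, by omega⟩ hj_sub rfl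
          hconj)
      · exact .inr (zpow_mul_zpow_mem_range_orbitRep_of_odd hi2 hi hj_sub
          (Int.modEq_iff_dvd.mpr ⟨-1, by ring⟩) hconj)

section BasisVector

open MonoidAlgebra

variable (n) (R : Type*) [CommRing R]

/-- The element `aⁱbʲ - b(aⁱbʲ)b⁻¹` of the claimed basis of `C̄(b)`, for the exponents `(i, j)`
indexed by `x`. -/
noncomputable def basisVector (x : BasisIndex n) : MonoidAlgebra R (V8n n) :=
  of R _ (orbitRep n x) - of R _ (MulAut.conj (bV n) (orbitRep n x))

theorem linearIndependent_basisVector : LinearIndependent R (basisVector n R) :=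
  linearIndependent_sub_of_injective_of_ne (MonoidAlgebra.basis (V8n n) R).linearIndependent
    orbitRep_injective conj_orbitRep_ne

variable {n} in
theorem span_range_basisVector [Invertible (2 : R)] (hn : 0 < n) :
    Submodule.span R (Set.range (basisVector n R)) = antiCentralizer R (of R (V8n n) (bV n)) :=
  (span_range_sub_comp_involutive (involutive_conj_of_sq_mem_center (bV_sq_mem_center n))
    (mem_range_orbitRep_or_conj_mem_range hn) (of R (V8n n))).trans
    (span_range_of_sub_of_conj (bV_sq_mem_center n))

variable {n} {R}

theorem of_sub_of_conj_of_even {i : ℤ} (hi : Even i) (j : ℕ) :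
    of R (V8n n) (aV n ^ i * bV n ^ (j : ℤ)) -
        of R (V8n n) (MulAut.conj (bV n) (aV n ^ i * bV n ^ (j : ℤ))) =
      (of R (V8n n) (aV n ^ i) - of R (V8n n) (aV n ^ (-i))) * of R (V8n n) (bV n) ^ j := by
  have hconj : MulAut.conj (bV n) (aV n ^ i * bV n ^ (j : ℤ)) = aV n ^ (-i) * bV n ^ (j : ℤ) := by
    rw [conj_bV_zpow_mul_zpow, zpow_mul_zpow_eq_iff, Int.ModEq, Int.ModEq]
    rw [Int.even_iff] at hi
    omega
  rw [hconj, zpow_natCast, sub_mul, ← map_pow, ← map_mul, ← map_mul]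

theorem of_sub_of_conj_of_odd {i : ℤ} (hi : Odd i) (j : ℕ) :
    of R (V8n n) (aV n ^ i * bV n ^ (j : ℤ)) -
        of R (V8n n) (MulAut.conj (bV n) (aV n ^ i * bV n ^ (j : ℤ))) =
      (of R (V8n n) (aV n ^ i) - of R (V8n n) (aV n ^ (-i) * bV n ^ 2)) *
        of R (V8n n) (bV n) ^ j := by
  have hconj : MulAut.conj (bV n) (aV n ^ i * bV n ^ (j : ℤ)) =
      aV n ^ (-i) * bV n ^ ((2 + j : ℕ) : ℤ) := by
    rw [conj_bV_zpow_mul_zpow, zpow_mul_zpow_eq_iff, Int.ModEq, Int.ModEq]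
    rw [Int.odd_iff] at hi
    omega
  rw [hconj, zpow_natCast, zpow_natCast, sub_mul, ← map_pow, ← map_mul, ← map_mul, pow_add,
    mul_assoc]

theorem basisVector_inl (k : Fin ((n - 1) / 2)) (j : Fin 4) :
    basisVector n R (.inl (k, j)) =
      (of R (V8n n) (aV n ^ (2 * (k + 1 : ℕ))) - of R (V8n n) ((aV n)⁻¹ ^ (2 * (k + 1 : ℕ)))) *
        of R (V8n n) (bV n) ^ (j : ℕ) := by
  refine (of_sub_of_conj_of_even (even_two_mul _) _).trans ?_
  rw [← inv_zpow']
  norm_cast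

theorem basisVector_inr_inl (k : Fin ((n + 1) / 2)) (j : Fin 2) :
    basisVector n R (.inr (.inl (k, j))) =
      (of R (V8n n) (aV n ^ (2 * k + 1 : ℕ)) -
          of R (V8n n) ((aV n)⁻¹ ^ (2 * k + 1 : ℕ) * bV n ^ 2)) *
        of R (V8n n) (bV n) ^ (j : ℕ) := by
  refine (of_sub_of_conj_of_odd (odd_two_mul_add_one _) _).trans ?_
  rw [← inv_zpow']
  norm_cast

theorem basisVector_inr_inr (k : Fin (n / 2)) (j : Fin 2) :
    basisVector n R (.inr (.inr (k, j))) =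
      (of R (V8n n) ((aV n)⁻¹ ^ (2 * k + 1 : ℕ)) -
          of R (V8n n) (aV n ^ (2 * k + 1 : ℕ) * bV n ^ 2)) *
        of R (V8n n) (bV n) ^ (j : ℕ) := by
  refine (of_sub_of_conj_of_odd (odd_two_mul_add_one _).neg _).trans ?_
  rw [neg_neg, ← inv_zpow']
  norm_cast

end BasisVector

theorem range_basisVector (F : Type*) [Field F] :
    Set.range (basisVector n F) = antiCentralizerBasisB n F := by
  ext v
  constructor
  · rintro ⟨⟨k, j⟩ | ⟨k, j⟩ | ⟨k, j⟩, rfl⟩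
    · exact .inl (.inl ⟨k + 1, j, by omega, by omega, by omega, basisVector_inl k j⟩)
    · refine .inl (.inr ⟨k + 1, by omega, by omega, ?_⟩)
      rw [basisVector_inr_inl]
      fin_cases j <;> simp [mul_add]
    · refine .inr ⟨k + 1, by omega, by omega, ?_⟩
      rw [basisVector_inr_inr]
      fin_cases j <;> simp [mul_add]
  · rintro ((⟨k, j, hk, hkn, hj, rfl⟩ | ⟨k, hk, hkn, hv⟩) | ⟨k, hk, hkn, hv⟩) <;>
      obtain ⟨k, rfl⟩ := Nat.exists_eq_add_of_le' hk
    · exact ⟨.inl (⟨k, hkn⟩, ⟨j, by omega⟩), basisVector_inl _ _⟩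
    · rcases hv with rfl | rfl
      · exact ⟨.inr (.inl (⟨k, by omega⟩, 0)), by simp [basisVector_inr_inl, mul_add]⟩
      · exact ⟨.inr (.inl (⟨k, by omega⟩, 1)), by simp [basisVector_inr_inl, mul_add]⟩
    · rcases hv with rfl | rfl
      · exact ⟨.inr (.inr (⟨k, by omega⟩, 0)), by simp [basisVector_inr_inr, mul_add]⟩
      · exact ⟨.inr (.inr (⟨k, by omega⟩, 1)), by simp [basisVector_inr_inr, mul_add]⟩

end V8n

/-- If `char F` is `0` or an odd prime, then the anti-centralizer
`C̄(b)` in `F V_{8n}` has dimension `4n−2` over `F` when `n` is odd and `4n−4` when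
`n` is even, and the set `antiCentralizerBasisB n F` is a basis of it. -/
theorem antiCentralizer_b_V8n (n : ℕ) (hn : 0 < n) (F : Type*) [Field F]
    (hchar : CharZero F ∨ ∃ p : ℕ, p.Prime ∧ Odd p ∧ CharP F p) :
    (Odd n →
      Module.finrank F (antiCentralizer F (MonoidAlgebra.of F (V8n n) (bV n))) = 4 * n - 2) ∧
    (Even n →
      Module.finrank F (antiCentralizer F (MonoidAlgebra.of F (V8n n) (bV n))) = 4 * n - 4) ∧
    LinearIndependent F ((↑) : antiCentralizerBasisB n F → MonoidAlgebra F (V8n n)) ∧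
    Submodule.span F (antiCentralizerBasisB n F) =
      antiCentralizer F (MonoidAlgebra.of F (V8n n) (bV n)) := by
  have h2 : (2 : F) ≠ 0 := by
    rcases hchar with _ | ⟨p, -, hp, _⟩
    · exact two_ne_zero
    · exact two_ne_zero_of_odd_charP F hp
  have : Invertible (2 : F) := invertibleOfNonzero h2
  have hli := V8n.linearIndependent_basisVector n F
  have hspan := V8n.span_range_basisVector F hn
  have hdim : Module.finrank F (antiCentralizer F (MonoidAlgebra.of F (V8n n) (bV n))) =
      4 * ((n - 1) / 2) + 2 * n := by
    rw [← hspan, finrank_span_eq_card hli, V8n.card_basisIndex]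
  rw [← V8n.range_basisVector F]
  refine ⟨fun hodd ↦ ?_, fun heven ↦ ?_, hli.linearIndepOn_id, hspan⟩
  · rw [Nat.odd_iff] at hodd
    omega
  · rw [Nat.even_iff] at heven
    omega
end

section
/- Let n be a positive integer and let F be a field whose characteristic is 0 or an odd rational prime p. Then in the group algebra F V_{8n}, the anti-centralizers of ba and b^{-1}a coincide: C̄(ba) = C̄(b^{-1}a). -/
/-!
`x = ba` and `y = b⁻¹a` are involutions and `b² = xy`. Since `(xy)² = b⁴ = 1`, they commute, so `b²`
commutes with `x` and with `b`, hence is central. As `x = b²y`, the two basis elements of the group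
algebra differ by a central unit, which cancels from the equation defining the anti-centralizer.
-/

section Group

variable {G : Type*} [Group G]

theorem commute_of_sq_eq_one {x y : G} (hx : x ^ 2 = 1) (hy : y ^ 2 = 1)
    (hxy : (x * y) ^ 2 = 1) : Commute x y :=
  calc x * y = (x * y)⁻¹ := eq_inv_of_mul_eq_one_left (by rwa [← sq])
    _ = y⁻¹ * x⁻¹ := mul_inv_rev x y
    _ = y * x := by
      rw [inv_eq_of_mul_eq_one_left (by rwa [← sq] : y * y = 1),
        inv_eq_of_mul_eq_one_left (by rwa [← sq] : x * x = 1)]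

variable {a b : G}

theorem commute_sq_of_mul_sq_eq_one (hb : b ^ 4 = 1) (hba : (b * a) ^ 2 = 1)
    (hbinva : (b⁻¹ * a) ^ 2 = 1) : Commute (b ^ 2) a := by
  have hinv : b⁻¹ * a = a⁻¹ * b := by
    rw [eq_inv_of_mul_eq_one_left (by rwa [← sq] : (b⁻¹ * a) * (b⁻¹ * a) = 1), mul_inv_rev, inv_inv]
  have hsq : b * a * (b⁻¹ * a) = b ^ 2 := by
    rw [hinv, mul_assoc, mul_inv_cancel_left, sq]
  have hcomm : Commute (b * a) (b⁻¹ * a) :=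
    commute_of_sq_eq_one hba hbinva (by rw [hsq, ← pow_mul, hb])
  have hsq_ba : Commute (b ^ 2) (b * a) :=
    hsq ▸ (Commute.refl (b * a)).mul_left hcomm.symm
  have hsq_binv : Commute (b ^ 2) b⁻¹ := (Commute.pow_self b 2).inv_right
  simpa only [inv_mul_cancel_left] using hsq_binv.mul_right hsq_ba

theorem sq_mem_center_of_closure_eq_top (hgen : Subgroup.closure {a, b} = ⊤) (hb : b ^ 4 = 1)
    (hba : (b * a) ^ 2 = 1) (hbinva : (b⁻¹ * a) ^ 2 = 1) : b ^ 2 ∈ Subgroup.center G := by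
  simp only [Subgroup.center_eq_iInf hgen, Subgroup.mem_iInf,
    Subgroup.mem_centralizer_singleton_iff]
  rintro g (rfl | rfl)
  · exact (commute_sq_of_mul_sq_eq_one hb hba hbinva).eq
  · exact (Commute.pow_self g 2).eq

end Group

theorem mem_antiCentralizer {F : Type*} [CommSemiring F] {A : Type*} [Ring A] [Algebra F A]
    {α β : A} : α ∈ antiCentralizer F β ↔ α * β = -(β * α) :=
  Iff.rfl

theorem antiCentralizer_mul_of_commute (F : Type*) [CommSemiring F] {A : Type*} [Ring A]
    [Algebra F A] {z : A} (hz : ∀ x, Commute z x) (hreg : IsLeftRegular z) (β : A) :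
    antiCentralizer F (z * β) = antiCentralizer F β := by
  ext α
  calc α ∈ antiCentralizer F (z * β)
    _ ↔ α * (z * β) = -(z * β * α) := mem_antiCentralizer
    _ ↔ z * (α * β) = z * -(β * α) := by
      rw [← mul_assoc, ← (hz α).eq, mul_assoc, mul_assoc, mul_neg]
    _ ↔ α * β = -(β * α) := hreg.eq_iff
    _ ↔ α ∈ antiCentralizer F β := mem_antiCentralizer.symm

theorem antiCentralizer_of_mul_of_mem_center (F : Type*) [CommRing F] {G : Type*} [Group G]
    {z : G} (hz : z ∈ Subgroup.center G) (g : G) :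
    antiCentralizer F (MonoidAlgebra.of F G (z * g)) =
      antiCentralizer F (MonoidAlgebra.of F G g) := by
  rw [map_mul]
  have hcomm : ∀ h, Commute h z := Subgroup.mem_center_iff.mp hz
  exact antiCentralizer_mul_of_commute F (MonoidAlgebra.of_commute fun h ↦ (hcomm h).symm)
    ((Group.isUnit z).map (MonoidAlgebra.of F G)).isRegular.left _

theorem antiCentralizer_ba_eq_antiCentralizer_binva_general (F : Type*) [CommRing F] {G : Type*}
    [Group G] {a b : G} (hgen : Subgroup.closure {a, b} = ⊤) (hb : b ^ 4 = 1)
    (hba : (b * a) ^ 2 = 1) (hbinva : (b⁻¹ * a) ^ 2 = 1) :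
    antiCentralizer F (MonoidAlgebra.of F G (b * a)) =
      antiCentralizer F (MonoidAlgebra.of F G (b⁻¹ * a)) := by
  have hfactor : b * a = b ^ 2 * (b⁻¹ * a) := by group
  rw [hfactor]
  exact antiCentralizer_of_mul_of_mem_center F
    (sq_mem_center_of_closure_eq_top hgen hb hba hbinva) _

section V8n

variable (n : ℕ)

theorem closure_aV_bV : Subgroup.closure {aV n, bV n} = ⊤ := by
  rw [← PresentedGroup.closure_range_of (V8nRels n)]
  congr 1
  ext g
  simp [aV, bV, Fin.exists_fin_two, eq_comm]

theorem bV_pow_four : bV n ^ 4 = 1 :=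
  PresentedGroup.one_of_mem (rels := V8nRels n) (x := FreeGroup.of 1 ^ 4) (by simp [V8nRels])

theorem bV_mul_aV_sq : (bV n * aV n) ^ 2 = 1 :=
  PresentedGroup.one_of_mem (rels := V8nRels n) (x := (FreeGroup.of 1 * FreeGroup.of 0) ^ 2)
    (by simp [V8nRels])

theorem bV_inv_mul_aV_sq : ((bV n)⁻¹ * aV n) ^ 2 = 1 :=
  PresentedGroup.one_of_mem (rels := V8nRels n) (x := ((FreeGroup.of 1)⁻¹ * FreeGroup.of 0) ^ 2)
    (by simp [V8nRels])

end V8n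

/-- If `char F` is `0` or an odd prime, then in `F V_{8n}` the
anti-centralizers of `ba` and `b⁻¹a` coincide. -/
theorem antiCentralizer_ba_eq_antiCentralizer_binva (n : ℕ) (hn : 0 < n)
    (F : Type*) [Field F]
    (hchar : CharZero F ∨ ∃ p : ℕ, p.Prime ∧ Odd p ∧ CharP F p) :
    antiCentralizer F (MonoidAlgebra.of F (V8n n) (bV n * aV n)) =
      antiCentralizer F (MonoidAlgebra.of F (V8n n) ((bV n)⁻¹ * aV n)) :=
  antiCentralizer_ba_eq_antiCentralizer_binva_general F (closure_aV_bV n) (bV_pow_four n)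
    (bV_mul_aV_sq n) (bV_inv_mul_aV_sq n)
end
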